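/- If f : S² → S² is a continuous open map and L ⊆ S² is a compact set such that S² \ L is connected (L is nonseparating), then every point of S² \ L has at least one preimage under f in every connected component of S² \ f⁻¹(L). -/

import Mathlib

/-!
Let `U` be a component of the open set `W = S² \ f⁻¹(L)`. Since the sphere is locally connected,
`U` is open, and it is relatively closed in `W`. Hence `f(U)` is open because `f` is open, and it
is relatively closed in `S² \ L`: by compactness the closure of `f(U)` lies in `f(closure U)`, and
a point of `closure U` mapped outside `L` lies in `W`, hence in `U`. As `S² \ L` is connected and
meets `f(U)`, it is contained in `f(U)`.
-/

open Set Metric Topology Filter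

noncomputable section

/-- The 2-dimensional sphere, realized as the unit sphere in `ℝ³`. -/
abbrev S2 : Type := ↥(Metric.sphere (0 : EuclideanSpace ℝ (Fin 3)) 1)

/-- A continuum is a nonempty compact connected (metric) space. -/
def IsContinuum {α : Type*} [TopologicalSpace α] (X : Set α) : Prop :=
  IsCompact X ∧ IsConnected X

/-- A continuum is indecomposable when it is not the union of two proper subcontinua. -/
def IsIndecomposable {α : Type*} [TopologicalSpace α] (X : Set α) : Prop :=
  IsContinuum X ∧
    ¬ ∃ A B : Set α, IsContinuum A ∧ A ⊆ X ∧ A ≠ X ∧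
      IsContinuum B ∧ B ⊆ X ∧ B ≠ X ∧ A ∪ B = X

/-- The composant of a point `p` in a continuum `X`: the union of all proper
subcontinua of `X` containing `p`. -/
def composant {α : Type*} [TopologicalSpace α] (X : Set α) (p : α) : Set α :=
  ⋃₀ {K : Set α | IsContinuum K ∧ K ⊆ X ∧ K ≠ X ∧ p ∈ K}

/-- `C` is a composant of `X` when it is the composant of some point of `X`. -/
def IsComposant {α : Type*} [TopologicalSpace α] (X C : Set α) : Prop :=
  ∃ p ∈ X, C = composant X p

/-- A composant `C` of `X` is internal when every continuum intersecting `C`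
but not contained in `X` intersects every composant of `X`. -/
def IsInternalComposant {α : Type*} [TopologicalSpace α] (X C : Set α) : Prop :=
  IsComposant X C ∧
    ∀ L : Set α, IsContinuum L → (L ∩ C).Nonempty → ¬ L ⊆ X →
      ∀ C' : Set α, IsComposant X C' → (L ∩ C').Nonempty

/-- An irreducible decomposition of a continuum `X`: a finite collection of
indecomposable subcontinua of `X` whose union is `X`, none of which is contained
in the union of the others. -/
def IsIrreducibleDecomposition {α : Type*} [TopologicalSpace α]
    (X : Set α) {n : ℕ} (A : Fin n → Set α) : Prop :=
  (∀ i, IsIndecomposable (A i) ∧ A i ⊆ X) ∧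
    X = ⋃ i, A i ∧
    ∀ j, ¬ A j ⊆ ⋃ i ∈ ({j}ᶜ : Set (Fin n)), A i

/-- A set `A` separates the sphere when its complement is disconnected. -/
def Separates (A : Set S2) : Prop := ¬ IsPreconnected Aᶜ

/-- A simple arc in the sphere with endpoints `a` and `b`. -/
def IsSimpleArc (A : Set S2) (a b : S2) : Prop :=
  ∃ γ : ℝ → S2, ContinuousOn γ (Icc 0 1) ∧ InjOn γ (Icc 0 1) ∧
    γ '' Icc 0 1 = A ∧ γ 0 = a ∧ γ 1 = b

/-- `f` is locally topologically conjugate, at the point `c`, to the map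
`z ↦ z ^ k` of the unit disk (so `c` is a critical point of local degree `k - 1`
when `k ≥ 2`). -/
def LocallyZPowAt (f : S2 → S2) (c : S2) (k : ℕ) : Prop :=
  ∃ (φ : PartialHomeomorph S2 ℂ) (ψ : PartialHomeomorph ℂ S2),
    c ∈ φ.source ∧ φ.target = Metric.ball (0 : ℂ) 1 ∧
    ψ.source = Metric.ball (0 : ℂ) 1 ∧ f c ∈ ψ.target ∧
    ∀ x ∈ φ.source, f x = ψ ((φ x) ^ k)

/-- A branched covering of the sphere of degree `d`: a continuous map which is a
`d`-fold covering map away from a finite set of critical points, near each of which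
it is locally conjugate to `z ↦ z ^ k` on the unit disk for some `k ≥ 2`. -/
def IsBranchedCovering (f : S2 → S2) (d : ℕ) : Prop :=
  Continuous f ∧
    ∃ Crit : Set S2, Crit.Finite ∧
      (∀ c ∈ Crit, ∃ k, 2 ≤ k ∧ LocallyZPowAt f c k) ∧
      IsCoveringMapOn f ((f '' Crit)ᶜ) ∧
      ∀ y ∉ f '' Crit, (f ⁻¹' {y}).ncard = d

/-- `f` is a polynomial-like mapping of degree `d`, with fully invariant simply
connected region `R` (whose complement has more than one point) containing the
critical point `c` of local degree `d - 1`.  The Julia set is `J(f) = frontier R`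
and the filled Julia set is `Rᶜ`. -/
def IsPolynomialLike (f : S2 → S2) (d : ℕ) (R : Set S2) (c : S2) : Prop :=
  IsBranchedCovering f d ∧
    IsOpen R ∧ IsConnected R ∧ SimplyConnectedSpace ↥R ∧
    Set.Nontrivial Rᶜ ∧ f ⁻¹' R = R ∧
    c ∈ R ∧ LocallyZPowAt f c d

/-- A crosscut of a region `U`: a simple arc contained in the closure of `U`
meeting the boundary of `U` exactly at its two (distinct) endpoints. -/
def IsCrosscut (U A : Set S2) : Prop :=
  ∃ a b : S2, a ≠ b ∧ IsSimpleArc A a b ∧ A ⊆ closure U ∧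
    A ∩ frontier U = {a, b}

/-- A fundamental chain in `U`: a nested sequence of regions `Rc k`, each a
connected component of `U \ A k` for crosscuts `A k` whose diameters tend to `0`.
The impression of the corresponding prime end is `⋂ k, closure (Rc k)`. -/
def IsFundamentalChain (U : Set S2) (Rc : ℕ → Set S2) : Prop :=
  ∃ A : ℕ → Set S2,
    (∀ k, IsCrosscut U (A k)) ∧
    (∀ k, ∃ x ∈ U \ A k, Rc k = connectedComponentIn (U \ A k) x) ∧
    (∀ k, Rc (k + 1) ⊆ Rc k) ∧
    Tendsto (fun k => Metric.diam (A k)) atTop (nhds 0)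

end

/-- The sphere is locally connected, being a topological manifold. -/
theorem locallyConnectedSpace_S2 : LocallyConnectedSpace S2 := by
  have : Fact (Module.finrank ℝ (EuclideanSpace ℝ (Fin 3)) = 2 + 1) := ⟨by simp⟩
  exact ChartedSpace.locallyConnectedSpace (EuclideanSpace ℝ (Fin 2)) S2

theorem closure_connectedComponentIn_inter_subset {α : Type*} [TopologicalSpace α]
    [LocallyConnectedSpace α] {W : Set α} (hW : IsOpen W) (u : α) :
    closure (connectedComponentIn W u) ∩ W ⊆ connectedComponentIn W u := by
  rintro z ⟨hz, hzW⟩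
  -- The component of `z` is an open neighbourhood of `z`, so it meets the component of `u`.
  obtain ⟨w, hwz, hwu⟩ := mem_closure_iff.1 hz _ (hW.connectedComponentIn (x := z))
    (mem_connectedComponentIn hzW)
  rw [connectedComponentIn_eq hwu, ← connectedComponentIn_eq hwz]
  exact mem_connectedComponentIn hzW

/-- If `f : S² → S²` is continuous and open and `L ⊆ S²` is a nonseparating
compact set, then every point of `S² \ L` has a preimage in every connected
component of `S² \ f⁻¹(L)`. -/
theorem preimage_in_every_component
    (f : S2 → S2) (hf : Continuous f) (hfo : IsOpenMap f)
    (L : Set S2) (hL : IsCompact L) (hLns : IsPreconnected Lᶜ) :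
    ∀ x ∉ L, ∀ u ∉ f ⁻¹' L,
      ∃ v ∈ connectedComponentIn (f ⁻¹' L)ᶜ u, f v = x := by
  intro x hx u hu
  have := locallyConnectedSpace_S2
  have hW : IsOpen (f ⁻¹' L)ᶜ := (hL.isClosed.preimage hf).isOpen_compl
  set U := connectedComponentIn (f ⁻¹' L)ᶜ u
  have huU : u ∈ U := mem_connectedComponentIn hu
  have hclosed : closure (f '' U) ∩ Lᶜ ⊆ f '' U := by
    rintro y ⟨hy, hyL⟩
    have hsub : closure (f '' U) ⊆ f '' closure U :=
      closure_minimal (image_mono subset_closure)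
        (isClosed_closure.isCompact.image hf).isClosed
    obtain ⟨z, hz, rfl⟩ := hsub hy
    exact ⟨z, closure_connectedComponentIn_inter_subset hW u ⟨hz, hyL⟩, rfl⟩
  exact hLns.subset_of_closure_inter_subset (hfo U hW.connectedComponentIn)
    ⟨f u, hu, u, huU, rfl⟩ hclosed hx
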